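/- Let L and S be positive integers with S ≤ L, let γ ∈ (0,1) be the positive root of Lγ + Sγ² = 1, let (ξ^j)_{j≥1} be the (L,S)-sequence of points, and let (t_n) be given by t₀ = 1, t₁ = L+S, t_n = L t_{n−1} + S t_{n−2}. Then there exist constants c₁, c₁′ > 0 such that for every integer n ≥ 1 one has c₁′ ≤ t_n · D(ξ¹, ξ², …, ξ^{t_n}) ≤ c₁; that is, the first t_n points of the (L,S)-sequence (which are the left endpoints of the intervals of the n-th (L,S)-partition ρⁿ_{L,S}) form a point set whose normalized discrepancy is bounded above and below by positive constants. -/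

import Mathlib

open Finset Real

noncomputable section

/-- The `k`-th digit of `n` in base `b`. -/
def lsDigit (b n k : ℕ) : ℕ := n / b ^ k % b

/-- Membership in the set `N_{L,S}`: for every `k`, the pair of consecutive digits
`(a_k(n), a_{k+1}(n))` in base `L+S` does not lie in
`{L,…,L+S−1} × {1,…,L+S−1}`. -/
def memNLS (L S n : ℕ) : Prop :=
  ∀ k : ℕ, ¬ (L ≤ lsDigit (L + S) n k ∧ lsDigit (L + S) n k ≤ L + S - 1 ∧
      1 ≤ lsDigit (L + S) n (k + 1) ∧ lsDigit (L + S) n (k + 1) ≤ L + S - 1)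

/-- The modified digit `ã`: `ã = a` if `a ≤ L−1`, and `ã = L + γ(a−L)` if `L ≤ a`. -/
def lsTilde (L : ℕ) (γ : ℝ) (a : ℕ) : ℝ :=
  if a < L then (a : ℝ) else (L : ℝ) + γ * ((a : ℝ) - (L : ℝ))

/-- The radical-inverse-type function `φ_{L,S}(n) = Σ_{k=0}^{M} ã_k(n) γ^{k+1}`,
with `M = ⌊log_{L+S} n⌋`. -/
def lsPhi (L S : ℕ) (γ : ℝ) (n : ℕ) : ℝ :=
  ∑ k ∈ Finset.range (Nat.log (L + S) n + 1),
    lsTilde L γ (lsDigit (L + S) n k) * γ ^ (k + 1)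

/-- The `(L,S)`-sequence of points: `ξ^j = φ_{L,S}(n_j)` where `n_1 < n_2 < ⋯`
is the increasing enumeration of `N_{L,S}` (so `n_j = Nat.nth (memNLS L S) (j-1)`). -/
def lsSeq (L S : ℕ) (γ : ℝ) (j : ℕ) : ℝ :=
  lsPhi L S γ (Nat.nth (memNLS L S) (j - 1))

/-- One-dimensional discrepancy of the first `N` terms `x 1, …, x N` of a sequence:
`sup_{0 ≤ a < b ≤ 1} |(1/N) Σ_{j=1}^N χ_{[a,b)}(x j) − (b−a)|`. -/
def discrep (x : ℕ → ℝ) (N : ℕ) : ℝ :=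
  ⨆ p : {p : ℝ × ℝ // 0 ≤ p.1 ∧ p.1 < p.2 ∧ p.2 ≤ 1},
    |(∑ j ∈ Finset.Icc 1 N,
        Set.indicator (Set.Ico p.1.1 p.1.2) (fun _ => (1 : ℝ)) (x j)) / N
      - (p.1.2 - p.1.1)|

/-- Two-dimensional (star) discrepancy of the first `N` terms of a sequence of points
in the unit square:
`sup_{0 < a ≤ 1, 0 < b ≤ 1} |(1/N) Σ_{j=1}^N χ_{[0,a)×[0,b)}(x j) − ab|`. -/
def discrep2 (x : ℕ → ℝ × ℝ) (N : ℕ) : ℝ :=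
  ⨆ p : {p : ℝ × ℝ // 0 < p.1 ∧ p.1 ≤ 1 ∧ 0 < p.2 ∧ p.2 ≤ 1},
    |(∑ j ∈ Finset.Icc 1 N,
        Set.indicator (Set.Ico (0 : ℝ) p.1.1) (fun _ => (1 : ℝ)) (x j).1 *
        Set.indicator (Set.Ico (0 : ℝ) p.1.2) (fun _ => (1 : ℝ)) (x j).2) / N
      - p.1.1 * p.1.2|

section Digits

variable {L S : ℕ} {γ : ℝ}

theorem lsDigit_mul_add_zero {b d : ℕ} (hd : d < b) (m : ℕ) : lsDigit b (b * m + d) 0 = d := by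
  simp [lsDigit, Nat.mod_eq_of_lt hd]

theorem lsDigit_mul_add_succ {b d : ℕ} (hd : d < b) (m k : ℕ) :
    lsDigit b (b * m + d) (k + 1) = lsDigit b m k := by
  have hb : 0 < b := by omega
  simp only [lsDigit, pow_succ']
  rw [← Nat.div_div_eq_div_mul, Nat.mul_add_div hb, Nat.div_eq_of_lt hd, add_zero]

theorem lsDigit_eq_zero {b m k : ℕ} (h : m < b ^ k) : lsDigit b m k = 0 := by
  simp [lsDigit, Nat.div_eq_of_lt h]

theorem memNLS_mul_add {d : ℕ} (hd : d < L + S) (m : ℕ) :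
    memNLS L S ((L + S) * m + d) ↔ (L ≤ d → m % (L + S) = 0) ∧ memNLS L S m := by
  have h0 : lsDigit (L + S) m 0 = m % (L + S) := by simp [lsDigit]
  have hlt : m % (L + S) < L + S := Nat.mod_lt _ (by omega)
  constructor
  · intro h
    refine ⟨fun hL => ?_, fun k => ?_⟩
    · have := h 0
      rw [lsDigit_mul_add_zero hd, zero_add, lsDigit_mul_add_succ hd, h0] at this
      omega
    · have := h (k + 1)
      rwa [lsDigit_mul_add_succ hd, lsDigit_mul_add_succ hd] at this
  · rintro ⟨h1, h2⟩ (_ | k)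
    · rw [lsDigit_mul_add_zero hd, zero_add, lsDigit_mul_add_succ hd, h0]
      omega
    · rw [lsDigit_mul_add_succ hd, lsDigit_mul_add_succ hd]
      exact h2 k

theorem memNLS_zero : memNLS L S 0 := by
  intro k
  simp [lsDigit]

theorem lsTilde_zero (hL : 0 < L) : lsTilde L γ 0 = 0 := by
  simp [lsTilde, hL]

theorem lsPhi_eq_sum_range (hL : 0 < L) (hS : 0 < S) {m K : ℕ} (h : m < (L + S) ^ K) :
    lsPhi L S γ m =
      ∑ k ∈ Finset.range K, lsTilde L γ (lsDigit (L + S) m k) * γ ^ (k + 1) := by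
  have hb : 1 < L + S := by omega
  have key : ∀ {K K' : ℕ}, m < (L + S) ^ K → K ≤ K' →
      ∑ k ∈ Finset.range K, lsTilde L γ (lsDigit (L + S) m k) * γ ^ (k + 1) =
        ∑ k ∈ Finset.range K', lsTilde L γ (lsDigit (L + S) m k) * γ ^ (k + 1) := by
    intro K K' hK hKK'
    refine Finset.sum_subset (Finset.range_mono hKK') fun k _ hk => ?_
    have hk' : K ≤ k := by simpa using hk
    rw [lsDigit_eq_zero (hK.trans_le (Nat.pow_le_pow_right (by omega) hk')), lsTilde_zero hL,
      zero_mul]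
  rw [lsPhi, key (Nat.lt_pow_succ_log_self hb m) (le_max_left _ K),
    key h (le_max_right (Nat.log (L + S) m + 1) K)]

theorem lsPhi_zero (hL : 0 < L) (hS : 0 < S) : lsPhi L S γ 0 = 0 := by
  rw [lsPhi_eq_sum_range hL hS (K := 0) (by simp), Finset.sum_range_zero]

theorem lsPhi_mul_add (hL : 0 < L) (hS : 0 < S) {d : ℕ} (hd : d < L + S) (m : ℕ) :
    lsPhi L S γ ((L + S) * m + d) = lsTilde L γ d * γ + γ * lsPhi L S γ m := by
  have hm : m < (L + S) ^ m := Nat.lt_pow_self (by omega)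
  have hm' : (L + S) * m + d < (L + S) ^ (m + 1) := by
    rw [pow_succ']
    nlinarith
  rw [lsPhi_eq_sum_range hL hS hm', lsPhi_eq_sum_range hL hS hm, Finset.sum_range_succ',
    Finset.mul_sum, lsDigit_mul_add_zero hd, add_comm]
  simp only [lsDigit_mul_add_succ hd, zero_add, pow_one]
  congr 1
  refine Finset.sum_congr rfl fun k _ => ?_
  ring

end Digits

theorem sum_range_mul_eq_sum_sum (b N : ℕ) (g : ℕ → ℝ) :
    ∑ m ∈ Finset.range (b * N), g m =
      ∑ d ∈ Finset.range b, ∑ m ∈ Finset.range N, g (b * m + d) := by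
  induction N with
  | zero => simp
  | succ N ih =>
    rw [Nat.mul_succ, Finset.sum_range_add, ih, ← Finset.sum_add_distrib]
    exact Finset.sum_congr rfl fun d _ => (Finset.sum_range_succ _ _).symm

open Classical in
/-- The sum of `f` over the points `φ_{L,S}(m)` with `m ∈ N_{L,S}`, `m < (L+S)^n`. -/
def lsSum (L S : ℕ) (γ : ℝ) (n : ℕ) (f : ℝ → ℝ) : ℝ :=
  ∑ m ∈ Finset.range ((L + S) ^ n), if memNLS L S m then f (lsPhi L S γ m) else 0

section Sums

variable {L S : ℕ} {γ : ℝ}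

theorem lsSum_zero (hL : 0 < L) (hS : 0 < S) (f : ℝ → ℝ) : lsSum L S γ 0 f = f 0 := by
  simp [lsSum, memNLS_zero, lsPhi_zero hL hS]

theorem lsSum_sub (n : ℕ) (f g : ℝ → ℝ) :
    lsSum L S γ n (fun y => f y - g y) = lsSum L S γ n f - lsSum L S γ n g := by
  unfold lsSum
  rw [← Finset.sum_sub_distrib]
  refine Finset.sum_congr rfl fun m _ => ?_
  split_ifs <;> simp

theorem lsSum_mono (n : ℕ) {f g : ℝ → ℝ} (h : ∀ y, f y ≤ g y) :
    lsSum L S γ n f ≤ lsSum L S γ n g := by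
  refine Finset.sum_le_sum fun m _ => ?_
  split_ifs
  · exact h _
  · exact le_rfl

open Classical in
theorem lsSum_succ (hL : 0 < L) (hS : 0 < S) (n : ℕ) (f : ℝ → ℝ) :
    lsSum L S γ (n + 1) f =
      ∑ d ∈ Finset.range L, lsSum L S γ n (fun y => f (d * γ + γ * y)) +
      ∑ i ∈ Finset.range S, ∑ m ∈ Finset.range ((L + S) ^ n),
        if m % (L + S) = 0 ∧ memNLS L S m then
          f (L * γ + i * γ ^ 2 + γ * lsPhi L S γ m) else 0 := by
  unfold lsSum
  rw [pow_succ', sum_range_mul_eq_sum_sum, Finset.sum_range_add]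
  congr 1
  · refine Finset.sum_congr rfl fun d hd => Finset.sum_congr rfl fun m _ => ?_
    have hd' : d < L := Finset.mem_range.1 hd
    rw [lsPhi_mul_add hL hS (by omega)]
    simp [memNLS_mul_add (show d < L + S by omega), lsTilde, hd']
  · refine Finset.sum_congr rfl fun i hi => Finset.sum_congr rfl fun m _ => ?_
    have hi' : i < S := Finset.mem_range.1 hi
    rw [lsPhi_mul_add hL hS (by omega)]
    simp only [memNLS_mul_add (show L + i < L + S by omega), lsTilde, Nat.le_add_right,
      true_imp_iff, if_neg (show ¬ L + i < L by omega)]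
    congr 2
    push_cast
    ring

theorem lsSum_one (hL : 0 < L) (hS : 0 < S) (f : ℝ → ℝ) :
    lsSum L S γ 1 f =
      ∑ d ∈ Finset.range L, f (d * γ) + ∑ i ∈ Finset.range S, f (L * γ + i * γ ^ 2) := by
  rw [← zero_add 1, lsSum_succ hL hS]
  simp [lsSum_zero hL hS, memNLS_zero, lsPhi_zero hL hS]

theorem lsSum_add_two (hL : 0 < L) (hS : 0 < S) (n : ℕ) (f : ℝ → ℝ) :
    lsSum L S γ (n + 2) f =
      ∑ d ∈ Finset.range L, lsSum L S γ (n + 1) (fun y => f (d * γ + γ * y)) +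
      ∑ i ∈ Finset.range S, lsSum L S γ n (fun y => f (L * γ + i * γ ^ 2 + γ ^ 2 * y)) := by
  rw [lsSum_succ hL hS (n + 1)]
  congr 1
  refine Finset.sum_congr rfl fun i _ => ?_
  have hb : 0 < L + S := by omega
  rw [pow_succ', sum_range_mul_eq_sum_sum, Finset.sum_eq_single_of_mem 0 (by simpa using hb)]
  · refine Finset.sum_congr rfl fun m _ => ?_
    rw [lsPhi_mul_add hL hS hb, lsTilde_zero hL]
    have hmem : ((L + S) * m + 0) % (L + S) = 0 ∧ memNLS L S ((L + S) * m + 0) ↔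
        memNLS L S m := by
      rw [memNLS_mul_add hb]
      simp [hL.ne']
    by_cases h : memNLS L S m
    · rw [if_pos (hmem.2 h), if_pos h]
      congr 1
      ring
    · rw [if_neg (mt hmem.1 h), if_neg h]
  · intro d hd hd0
    have hd' : d < L + S := Finset.mem_range.1 hd
    refine Finset.sum_eq_zero fun m _ => if_neg fun h => hd0 ?_
    simpa [Nat.mul_add_mod, Nat.mod_eq_of_lt hd'] using h.1

/-- `lsSum` only sees the values of `f` on `[0,1)`, and `t n` points are summed over. -/
theorem lsSum_const (hL : 0 < L) (hS : 0 < S) (hγ0 : 0 < γ)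
    (hroot : (L : ℝ) * γ + (S : ℝ) * γ ^ 2 = 1)
    {t : ℕ → ℕ} (ht0 : t 0 = 1) (ht1 : t 1 = L + S)
    (htrec : ∀ n, t (n + 2) = L * t (n + 1) + S * t n) (n : ℕ) (c : ℝ) :
    ∀ f : ℝ → ℝ, (∀ y, 0 ≤ y → y < 1 → f y = c) → lsSum L S γ n f = t n * c := by
  have hγ2 : 0 < γ ^ 2 := by positivity
  have hd : ∀ d < L, ∀ y : ℝ, 0 ≤ y → y < 1 → 0 ≤ d * γ + γ * y ∧ d * γ + γ * y < 1 := by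
    intro d hd y hy0 hy1
    have hdL : (d : ℝ) + 1 ≤ L := by exact_mod_cast hd
    have h3 : ((d : ℝ) + 1) * γ ≤ L * γ := by gcongr
    have h4 : 0 ≤ (S : ℝ) * γ ^ 2 := by positivity
    exact ⟨by positivity, by nlinarith⟩
  have hi : ∀ i < S, ∀ y : ℝ, 0 ≤ y → y < 1 →
      0 ≤ L * γ + i * γ ^ 2 + γ ^ 2 * y ∧ L * γ + i * γ ^ 2 + γ ^ 2 * y < 1 := by
    intro i hi y hy0 hy1
    have hiS : (i : ℝ) + 1 ≤ S := by exact_mod_cast hi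
    have h3 : ((i : ℝ) + 1) * γ ^ 2 ≤ S * γ ^ 2 := by gcongr
    exact ⟨by positivity, by nlinarith⟩
  induction n using Nat.strong_induction_on with
  | _ n ih =>
    intro f hf
    match n with
    | 0 => simp [lsSum_zero hL hS, ht0, hf 0 le_rfl one_pos]
    | 1 =>
      rw [lsSum_one hL hS, Finset.sum_congr rfl (g := fun _ => c),
        Finset.sum_congr (s₁ := Finset.range S) rfl (g := fun _ => c)]
      · simp [ht1, add_mul]
      · intro i hi'
        have := hi i (Finset.mem_range.1 hi') 0 le_rfl one_pos
        rw [mul_zero, add_zero] at this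
        exact hf _ this.1 this.2
      · intro d hd'
        have := hd d (Finset.mem_range.1 hd') 0 le_rfl one_pos
        rw [mul_zero, add_zero] at this
        exact hf _ this.1 this.2
    | n + 2 =>
      rw [lsSum_add_two hL hS, Finset.sum_congr rfl (g := fun _ => t (n + 1) * c),
        Finset.sum_congr (s₁ := Finset.range S) rfl (g := fun _ => t n * c)]
      · simp only [Finset.sum_const, Finset.card_range, nsmul_eq_mul, htrec]
        push_cast
        ring
      · intro i hi'
        refine ih n (by omega) _ fun y hy0 hy1 => ?_
        have := hi i (Finset.mem_range.1 hi') y hy0 hy1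
        exact hf _ this.1 this.2
      · intro d hd'
        refine ih (n + 1) (by omega) _ fun y hy0 hy1 => ?_
        have := hd d (Finset.mem_range.1 hd') y hy0 hy1
        exact hf _ this.1 this.2

end Sums

theorem sum_range_eq_of_step {K d : ℕ} (hd : d < K) {g : ℕ → ℝ} {c : ℝ}
    (h1 : ∀ j < d, g j = c) (h2 : ∀ j, d < j → g j = 0) :
    ∑ j ∈ Finset.range K, g j = d * c + g d := by
  rw [← Finset.sum_subset (Finset.range_mono (show d + 1 ≤ K from hd)), Finset.sum_range_succ,
    Finset.sum_congr rfl (g := fun _ => c)]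
  · simp
  · exact fun j hj => h1 j (Finset.mem_range.1 hj)
  · exact fun j _ hj => h2 j (by simpa using hj)

open Classical in
theorem sum_range_count_nth (p : ℕ → Prop) (N : ℕ) (f : ℕ → ℝ) :
    ∑ j ∈ Finset.range (Nat.count p N), f (Nat.nth p j) =
      ∑ m ∈ Finset.range N, if p m then f m else 0 := by
  induction N with
  | zero => simp
  | succ N ih =>
    rw [Finset.sum_range_succ, ← ih, Nat.count_succ]
    split_ifs with h
    · rw [Finset.sum_range_succ, Nat.nth_count h]
    · simp

/-- The number of points `φ_{L,S}(m)` below `x`, with `m ∈ N_{L,S}`, `m < (L+S)^n`. -/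
def lsCount (L S : ℕ) (γ : ℝ) (n : ℕ) (x : ℝ) : ℝ :=
  lsSum L S γ n (fun y => if y < x then 1 else 0)

section Count

variable {L S : ℕ} {γ : ℝ} {t : ℕ → ℕ}

theorem count_memNLS (hL : 0 < L) (hS : 0 < S) (hγ0 : 0 < γ)
    (hroot : (L : ℝ) * γ + (S : ℝ) * γ ^ 2 = 1) (ht0 : t 0 = 1) (ht1 : t 1 = L + S)
    (htrec : ∀ n, t (n + 2) = L * t (n + 1) + S * t n) (n : ℕ)
    [DecidablePred (memNLS L S)] :
    Nat.count (memNLS L S) ((L + S) ^ n) = t n := by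
  have h := lsSum_const hL hS hγ0 hroot ht0 ht1 htrec n 1 (fun _ => 1) fun _ _ _ => rfl
  rw [lsSum, mul_one, ← sum_range_count_nth (memNLS L S) _ (fun _ => (1 : ℝ))] at h
  simp only [Finset.sum_const, Finset.card_range, nsmul_eq_mul, mul_one] at h
  convert Nat.cast_injective h

theorem sum_lsSeq (hL : 0 < L) (hS : 0 < S) (hγ0 : 0 < γ)
    (hroot : (L : ℝ) * γ + (S : ℝ) * γ ^ 2 = 1) (ht0 : t 0 = 1) (ht1 : t 1 = L + S)
    (htrec : ∀ n, t (n + 2) = L * t (n + 1) + S * t n) (n : ℕ) (f : ℝ → ℝ) :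
    ∑ j ∈ Finset.Icc 1 (t n), f (lsSeq L S γ j) = lsSum L S γ n f := by
  classical
  rw [← Finset.Ico_add_one_right_eq_Icc, Finset.sum_Ico_eq_sum_range, Nat.add_sub_cancel,
    ← count_memNLS hL hS hγ0 hroot ht0 ht1 htrec n]
  simp only [lsSeq, Nat.add_sub_cancel_left]
  convert sum_range_count_nth (memNLS L S) ((L + S) ^ n) (fun m => f (lsPhi L S γ m))
  rw [lsSum]

theorem lsCount_of_nonpos (hL : 0 < L) (hS : 0 < S) (hγ0 : 0 < γ)
    (hroot : (L : ℝ) * γ + (S : ℝ) * γ ^ 2 = 1) (ht0 : t 0 = 1) (ht1 : t 1 = L + S)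
    (htrec : ∀ n, t (n + 2) = L * t (n + 1) + S * t n) (n : ℕ) {x : ℝ} (hx : x ≤ 0) :
    lsCount L S γ n x = 0 := by
  rw [lsCount, lsSum_const hL hS hγ0 hroot ht0 ht1 htrec n 0, mul_zero]
  exact fun y hy _ => if_neg (by linarith)

theorem lsCount_of_one_le (hL : 0 < L) (hS : 0 < S) (hγ0 : 0 < γ)
    (hroot : (L : ℝ) * γ + (S : ℝ) * γ ^ 2 = 1) (ht0 : t 0 = 1) (ht1 : t 1 = L + S)
    (htrec : ∀ n, t (n + 2) = L * t (n + 1) + S * t n) (n : ℕ) {x : ℝ} (hx : 1 ≤ x) :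
    lsCount L S γ n x = t n := by
  rw [lsCount, lsSum_const hL hS hγ0 hroot ht0 ht1 htrec n 1, mul_one]
  exact fun y _ hy => if_pos (by linarith)

theorem abs_lsCount_sub_le_card (hL : 0 < L) (hS : 0 < S) (hγ0 : 0 < γ)
    (hroot : (L : ℝ) * γ + (S : ℝ) * γ ^ 2 = 1) (ht0 : t 0 = 1) (ht1 : t 1 = L + S)
    (htrec : ∀ n, t (n + 2) = L * t (n + 1) + S * t n) (n : ℕ) {x : ℝ} (hx0 : 0 ≤ x)
    (hx1 : x ≤ 1) : |lsCount L S γ n x - t n * x| ≤ t n := by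
  have h0 := lsSum_const hL hS hγ0 hroot ht0 ht1 htrec n 0 (fun _ => 0) fun _ _ _ => rfl
  have h1 := lsSum_const hL hS hγ0 hroot ht0 ht1 htrec n 1 (fun _ => 1) fun _ _ _ => rfl
  have h2 : lsSum L S γ n (fun _ => 0) ≤ lsCount L S γ n x :=
    lsSum_mono n fun y => by split_ifs <;> norm_num
  have h3 : lsCount L S γ n x ≤ lsSum L S γ n (fun _ => 1) :=
    lsSum_mono n fun y => by split_ifs <;> norm_num
  have h4 : (0 : ℝ) ≤ t n := Nat.cast_nonneg _
  rw [abs_le]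
  constructor <;> nlinarith

theorem lsCount_add_two (hL : 0 < L) (hS : 0 < S) (hγ0 : 0 < γ) (n : ℕ) (x : ℝ) :
    lsCount L S γ (n + 2) x =
      ∑ d ∈ Finset.range L, lsCount L S γ (n + 1) (x / γ - d) +
      ∑ i ∈ Finset.range S, lsCount L S γ n ((x - L * γ) / γ ^ 2 - i) := by
  have hγ2 : 0 < γ ^ 2 := by positivity
  rw [lsCount, lsSum_add_two hL hS]
  congr 1
  · refine Finset.sum_congr rfl fun d _ => ?_
    rw [lsCount]
    congr 1
    ext y
    refine if_congr ?_ rfl rfl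
    rw [lt_sub_iff_add_lt, lt_div_iff₀ hγ0]
    ring_nf
  · refine Finset.sum_congr rfl fun i _ => ?_
    rw [lsCount]
    congr 1
    ext y
    refine if_congr ?_ rfl rfl
    rw [lt_sub_iff_add_lt, lt_div_iff₀ hγ2, lt_sub_iff_add_lt]
    ring_nf

theorem lsCount_add_two_of_lt (hL : 0 < L) (hS : 0 < S) (hγ0 : 0 < γ)
    (hroot : (L : ℝ) * γ + (S : ℝ) * γ ^ 2 = 1) (ht0 : t 0 = 1) (ht1 : t 1 = L + S)
    (htrec : ∀ n, t (n + 2) = L * t (n + 1) + S * t n) (n : ℕ) {d : ℕ} (hd : d < L) {y : ℝ}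
    (hy0 : 0 ≤ y) (hy1 : y < 1) :
    lsCount L S γ (n + 2) ((d + y) * γ) = d * t (n + 1) + lsCount L S γ (n + 1) y := by
  have hdL : (d : ℝ) + 1 ≤ L := by exact_mod_cast hd
  have hγ2 : 0 < γ ^ 2 := by positivity
  rw [lsCount_add_two hL hS hγ0, mul_div_cancel_right₀ _ hγ0.ne',
    sum_range_eq_of_step hd (c := (t (n + 1) : ℝ)), Finset.sum_eq_zero, add_sub_cancel_left,
    add_zero]
  · intro i _
    refine lsCount_of_nonpos hL hS hγ0 hroot ht0 ht1 htrec n ?_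
    have : ((d + y) * γ - L * γ) / γ ^ 2 ≤ 0 :=
      div_nonpos_of_nonpos_of_nonneg (by nlinarith) hγ2.le
    have : (0 : ℝ) ≤ i := Nat.cast_nonneg i
    linarith
  · intro j hj
    have : (j : ℝ) + 1 ≤ d := by exact_mod_cast hj
    exact lsCount_of_one_le hL hS hγ0 hroot ht0 ht1 htrec _ (by linarith)
  · intro j hj
    have : (d : ℝ) + 1 ≤ j := by exact_mod_cast hj
    exact lsCount_of_nonpos hL hS hγ0 hroot ht0 ht1 htrec _ (by linarith)

theorem lsCount_add_two_of_ge (hL : 0 < L) (hS : 0 < S) (hγ0 : 0 < γ)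
    (hroot : (L : ℝ) * γ + (S : ℝ) * γ ^ 2 = 1) (ht0 : t 0 = 1) (ht1 : t 1 = L + S)
    (htrec : ∀ n, t (n + 2) = L * t (n + 1) + S * t n) (n : ℕ) {i : ℕ} (hi : i < S) {y : ℝ}
    (hy0 : 0 ≤ y) (hy1 : y < 1) :
    lsCount L S γ (n + 2) (L * γ + (i + y) * γ ^ 2) =
      L * t (n + 1) + i * t n + lsCount L S γ n y := by
  have hγ2 : 0 < γ ^ 2 := by positivity
  rw [lsCount_add_two hL hS hγ0, add_sub_cancel_left, mul_div_cancel_right₀ _ hγ2.ne',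
    sum_range_eq_of_step hi (c := (t n : ℝ)),
    Finset.sum_congr rfl (g := fun _ => (t (n + 1) : ℝ)), add_sub_cancel_left]
  · simp only [Finset.sum_const, Finset.card_range, nsmul_eq_mul]
    ring
  · intro d hd
    have hdL : (d : ℝ) + 1 ≤ L := by exact_mod_cast Finset.mem_range.1 hd
    refine lsCount_of_one_le hL hS hγ0 hroot ht0 ht1 htrec _ ?_
    have h2 : (L : ℝ) ≤ (L * γ + (i + y) * γ ^ 2) / γ := by
      rw [le_div_iff₀ hγ0]
      have : 0 ≤ (i + y) * γ ^ 2 := by positivity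
      linarith
    linarith
  · intro j hj
    have : (j : ℝ) + 1 ≤ i := by exact_mod_cast hj
    exact lsCount_of_one_le hL hS hγ0 hroot ht0 ht1 htrec _ (by linarith)
  · intro j hj
    have : (i : ℝ) + 1 ≤ j := by exact_mod_cast hj
    exact lsCount_of_nonpos hL hS hγ0 hroot ht0 ht1 htrec _ (by linarith)

theorem sub_mul_succ_eq (hroot : (L : ℝ) * γ + (S : ℝ) * γ ^ 2 = 1) (ht0 : t 0 = 1)
    (ht1 : t 1 = L + S) (htrec : ∀ n, t (n + 2) = L * t (n + 1) + S * t n) (n : ℕ) :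
    (t n : ℝ) - γ * t (n + 1) = (-(S * γ)) ^ (n + 1) * (1 - γ) := by
  induction n with
  | zero =>
    rw [zero_add, ht0, ht1]
    push_cast
    linear_combination -hroot
  | succ n ih =>
    rw [pow_succ, htrec]
    push_cast
    linear_combination (-(S * γ)) * ih - (t (n + 1) : ℝ) * hroot

theorem abs_sub_mul_succ_le (hγ0 : 0 < γ) (hγ1 : γ < 1)
    (hroot : (L : ℝ) * γ + (S : ℝ) * γ ^ 2 = 1) (ht0 : t 0 = 1)
    (ht1 : t 1 = L + S) (htrec : ∀ n, t (n + 2) = L * t (n + 1) + S * t n) (n : ℕ) :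
    |(t n : ℝ) - γ * t (n + 1)| ≤ (S * γ) ^ (n + 1) := by
  have h : (0 : ℝ) ≤ S * γ := by positivity
  rw [sub_mul_succ_eq hroot ht0 ht1 htrec, abs_mul, abs_pow, abs_neg, abs_of_nonneg h,
    abs_of_nonneg (by linarith)]
  exact mul_le_of_le_one_right (by positivity) (by linarith)

theorem mul_root_lt_one (hSL : S ≤ L) (hγ0 : 0 < γ)
    (hroot : (L : ℝ) * γ + (S : ℝ) * γ ^ 2 = 1) : (S : ℝ) * γ < 1 := by
  have h1 : (S : ℝ) ≤ L := by exact_mod_cast hSL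
  by_contra! h
  have h2 : (S : ℝ) * γ ≤ L * γ := by gcongr
  nlinarith

/-- The local discrepancy of the first `t n` points is bounded by a partial geometric sum. -/
theorem abs_lsCount_sub_le (hL : 0 < L) (hS : 0 < S) (hSL : S ≤ L) (hγ0 : 0 < γ) (hγ1 : γ < 1)
    (hroot : (L : ℝ) * γ + (S : ℝ) * γ ^ 2 = 1) (ht0 : t 0 = 1) (ht1 : t 1 = L + S)
    (htrec : ∀ n, t (n + 2) = L * t (n + 1) + S * t n) (n : ℕ) :
    ∀ x : ℝ, 0 ≤ x → x ≤ 1 → |lsCount L S γ n x - t n * x| ≤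
      (L + S) + (L + 2 * S) * ∑ k ∈ Finset.range n, ((S : ℝ) * γ) ^ k := by
  have hq0 : (0 : ℝ) ≤ S * γ := by positivity
  have hq1 := mul_root_lt_one hSL hγ0 hroot
  have hsum : ∀ n, 0 ≤ ∑ k ∈ Finset.range n, ((S : ℝ) * γ) ^ k := fun n =>
    Finset.sum_nonneg fun k _ => by positivity
  have hLS : (1 : ℝ) ≤ L + S := by exact_mod_cast (by omega : 1 ≤ L + S)
  induction n using Nat.strong_induction_on with
  | _ n ih =>
    intro x hx0 hx1
    match n with
    | 0 =>
      refine (abs_lsCount_sub_le_card hL hS hγ0 hroot ht0 ht1 htrec 0 hx0 hx1).trans ?_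
      simpa [ht0] using hLS
    | 1 =>
      refine (abs_lsCount_sub_le_card hL hS hγ0 hroot ht0 ht1 htrec 1 hx0 hx1).trans ?_
      rw [ht1]
      push_cast
      exact le_add_of_nonneg_right (mul_nonneg (by positivity) (hsum 1))
    | n + 2 =>
      set q : ℝ := S * γ
      have hγ2 : 0 < γ ^ 2 := by positivity
      have hqn : 0 ≤ q ^ (n + 1) := by positivity
      have hqn' : q ^ (n + 2) ≤ q ^ (n + 1) := pow_le_pow_of_le_one hq0 hq1.le (by omega)
      have hδ1 := abs_sub_mul_succ_le hγ0 hγ1 hroot ht0 ht1 htrec n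
      have hδ2 := (abs_sub_mul_succ_le hγ0 hγ1 hroot ht0 ht1 htrec (n + 1)).trans hqn'
      have hδ3 : |(t n : ℝ) - γ ^ 2 * t (n + 2)| ≤ 2 * q ^ (n + 1) := by
        have : (t n : ℝ) - γ ^ 2 * t (n + 2) =
            (t n - γ * t (n + 1)) + γ * (t (n + 1) - γ * t (n + 2)) := by ring
        rw [this]
        refine (abs_add_le _ _).trans ?_
        rw [abs_mul, abs_of_pos hγ0]
        have := mul_le_of_le_one_left (abs_nonneg ((t (n + 1) : ℝ) - γ * t (n + 2))) hγ1.le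
        linarith
      rw [Finset.sum_range_succ]
      rcases hx1.eq_or_lt with rfl | hx1
      · rw [lsCount_of_one_le hL hS hγ0 hroot ht0 ht1 htrec _ le_rfl, mul_one, sub_self, abs_zero]
        have := hsum (n + 1)
        positivity
      rcases lt_or_ge x (L * γ) with hx | hx
      · have hxγ : 0 ≤ x / γ := by positivity
        obtain ⟨d, y, hd, hy0, hy1, rfl⟩ : ∃ (d : ℕ) (y : ℝ), d < L ∧ 0 ≤ y ∧ y < 1 ∧
            x = (d + y) * γ := by
          refine ⟨⌊x / γ⌋₊, x / γ - ⌊x / γ⌋₊, ?_, ?_, ?_, ?_⟩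
          · rw [Nat.floor_lt hxγ, div_lt_iff₀ hγ0]
            exact hx
          · exact sub_nonneg.2 (Nat.floor_le hxγ)
          · linarith [Nat.lt_floor_add_one (x / γ)]
          · field_simp
            ring
        have hdL : (d : ℝ) + 1 ≤ L := by exact_mod_cast hd
        have hE := ih (n + 1) (by omega) y hy0 hy1.le
        rw [lsCount_add_two_of_lt hL hS hγ0 hroot ht0 ht1 htrec n hd hy0 hy1]
        have heq : (d : ℝ) * t (n + 1) + lsCount L S γ (n + 1) y - t (n + 2) * ((d + y) * γ) =
            (lsCount L S γ (n + 1) y - t (n + 1) * y) +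
              (d + y) * (t (n + 1) - γ * t (n + 2)) := by ring
        have hdy : (0 : ℝ) ≤ d + y := by positivity
        have hrem : |((d : ℝ) + y) * (t (n + 1) - γ * t (n + 2))| ≤ L * q ^ (n + 1) := by
          rw [abs_mul, abs_of_nonneg hdy]
          exact mul_le_mul (by linarith) hδ2 (abs_nonneg _) (by positivity)
        have hSq : 0 ≤ (S : ℝ) * q ^ (n + 1) := by positivity
        rw [heq]
        refine (abs_add_le _ _).trans ?_
        linarith
      · have hz : 0 ≤ (x - L * γ) / γ ^ 2 := div_nonneg (by linarith) hγ2.le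
        obtain ⟨i, y, hi, hy0, hy1, rfl⟩ : ∃ (i : ℕ) (y : ℝ), i < S ∧ 0 ≤ y ∧ y < 1 ∧
            x = L * γ + (i + y) * γ ^ 2 := by
          refine ⟨⌊(x - L * γ) / γ ^ 2⌋₊, (x - L * γ) / γ ^ 2 - ⌊(x - L * γ) / γ ^ 2⌋₊,
            ?_, ?_, ?_, ?_⟩
          · rw [Nat.floor_lt hz, div_lt_iff₀ hγ2]
            linarith
          · exact sub_nonneg.2 (Nat.floor_le hz)
          · linarith [Nat.lt_floor_add_one ((x - L * γ) / γ ^ 2)]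
          · rw [add_sub_cancel, div_mul_cancel₀ _ hγ2.ne']
            ring
        have hiS : (i : ℝ) + 1 ≤ S := by exact_mod_cast hi
        have hE := ih n (by omega) y hy0 hy1.le
        rw [lsCount_add_two_of_ge hL hS hγ0 hroot ht0 ht1 htrec n hi hy0 hy1]
        have heq : (L : ℝ) * t (n + 1) + i * t n + lsCount L S γ n y -
            t (n + 2) * (L * γ + (i + y) * γ ^ 2) =
            (lsCount L S γ n y - t n * y) + L * (t (n + 1) - γ * t (n + 2)) +
              (i + y) * (t n - γ ^ 2 * t (n + 2)) := by ring
        have hiy : (0 : ℝ) ≤ i + y := by positivity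
        have hrem1 : |(L : ℝ) * (t (n + 1) - γ * t (n + 2))| ≤ L * q ^ (n + 1) := by
          rw [abs_mul, Nat.abs_cast]
          gcongr
        have hrem2 : |((i : ℝ) + y) * (t n - γ ^ 2 * t (n + 2))| ≤ S * (2 * q ^ (n + 1)) := by
          rw [abs_mul, abs_of_nonneg hiy]
          exact mul_le_mul (by linarith) hδ3 (abs_nonneg _) (by positivity)
        have hlast : 0 ≤ ((L : ℝ) + 2 * S) * q ^ n := by positivity
        rw [heq, Finset.sum_range_succ]
        refine (abs_add_three _ _ _).trans ?_
        linarith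

end Count

theorem indicator_Ico_eq_sub {a b : ℝ} (hab : a < b) (y : ℝ) :
    Set.indicator (Set.Ico a b) (fun _ => (1 : ℝ)) y =
      (if y < b then 1 else 0) - (if y < a then 1 else 0) := by
  rw [Set.indicator_apply]
  simp only [Set.mem_Ico]
  grind

/-- If `S ≤ L`, the first `t_n` points of the `(L,S)`-sequence
have normalized discrepancy bounded above and below by positive constants:
`c₁′ ≤ t_n · D(ξ¹,…,ξ^{t_n}) ≤ c₁` for all `n ≥ 1`. -/
theorem ls_partition_discrepancy_SleL (L S : ℕ) (hL : 0 < L) (hS : 0 < S) (hSL : S ≤ L)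
    (γ : ℝ) (hγ0 : 0 < γ) (hγ1 : γ < 1)
    (hroot : (L : ℝ) * γ + (S : ℝ) * γ ^ 2 = 1)
    (t : ℕ → ℕ) (ht0 : t 0 = 1) (ht1 : t 1 = L + S)
    (htrec : ∀ n, 2 ≤ n → t n = L * t (n - 1) + S * t (n - 2)) :
    ∃ c₁ c₁' : ℝ, 0 < c₁ ∧ 0 < c₁' ∧ ∀ n : ℕ, 1 ≤ n →
      c₁' ≤ (t n : ℝ) * discrep (lsSeq L S γ) (t n) ∧
      (t n : ℝ) * discrep (lsSeq L S γ) (t n) ≤ c₁ := by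
  replace htrec : ∀ n, t (n + 2) = L * t (n + 1) + S * t n := fun n => htrec (n + 2) (by omega)
  set q : ℝ := S * γ
  have hq0 : 0 ≤ q := by positivity
  have hq1 : q < 1 := mul_root_lt_one hSL hγ0 hroot
  have hq1' : 0 < 1 - q := by linarith
  set M : ℝ := (L + S) + (L + 2 * S) * (1 - q)⁻¹ with hM
  have hMpos : 0 < M := by positivity
  have htpos : ∀ n, 0 < t n := by
    intro n
    induction n using Nat.strong_induction_on with
    | _ n ih =>
      match n with
      | 0 => omega
      | 1 => omega
      | n + 2 =>
        rw [htrec]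
        exact Nat.add_pos_left (Nat.mul_pos hL (ih (n + 1) (by omega))) _
  refine ⟨2 * M, 1 / 2, by positivity, by norm_num, fun n _ => ?_⟩
  have hN : (0 : ℝ) < t n := by exact_mod_cast htpos n
  have hN1 : (1 : ℝ) ≤ t n := by exact_mod_cast htpos n
  have hE : ∀ x : ℝ, 0 ≤ x → x ≤ 1 → |lsCount L S γ n x - t n * x| ≤ M := by
    intro x hx0 hx1
    refine (abs_lsCount_sub_le hL hS hSL hγ0 hγ1 hroot ht0 ht1 htrec n x hx0 hx1).trans ?_
    rw [hM]
    gcongr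
    rw [← tsum_geometric_of_lt_one hq0 hq1]
    exact (summable_geometric_of_lt_one hq0 hq1).sum_le_tsum _ fun k _ => by positivity
  have hbound : ∀ p : {p : ℝ × ℝ // 0 ≤ p.1 ∧ p.1 < p.2 ∧ p.2 ≤ 1},
      |(∑ j ∈ Finset.Icc 1 (t n),
        Set.indicator (Set.Ico p.1.1 p.1.2) (fun _ => (1 : ℝ)) (lsSeq L S γ j)) / t n
      - (p.1.2 - p.1.1)| ≤ 2 * M / t n := by
    rintro ⟨⟨a, b⟩, ha, hab, hb⟩
    dsimp only at ha hab hb ⊢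
    rw [sum_lsSeq hL hS hγ0 hroot ht0 ht1 htrec n]
    have hcount : lsSum L S γ n (Set.indicator (Set.Ico a b) fun _ => (1 : ℝ)) =
        lsCount L S γ n b - lsCount L S γ n a := by
      rw [lsCount, lsCount, ← lsSum_sub]
      exact congrArg _ (funext (indicator_Ico_eq_sub hab))
    have heq : (lsCount L S γ n b - lsCount L S γ n a) / t n - (b - a) =
        ((lsCount L S γ n b - t n * b) - (lsCount L S γ n a - t n * a)) / t n := by
      field_simp
      ring
    rw [hcount, heq, abs_div, abs_of_pos hN]
    gcongr
    refine (abs_sub _ _).trans ?_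
    linarith [hE a ha (hab.le.trans hb), hE b (ha.trans hab.le) hb]
  constructor
  · have hε : 1 / (2 * (t n : ℝ)) ≤ 1 := by
      rw [div_le_one (by positivity)]
      linarith
    have hsup : 1 / (2 * (t n : ℝ)) ≤ discrep (lsSeq L S γ) (t n) := by
      refine le_trans ?_ (le_ciSup (f := fun p : {p : ℝ × ℝ // 0 ≤ p.1 ∧ p.1 < p.2 ∧ p.2 ≤ 1} =>
        |(∑ j ∈ Finset.Icc 1 (t n),
          Set.indicator (Set.Ico p.1.1 p.1.2) (fun _ => (1 : ℝ)) (lsSeq L S γ j)) / t n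
        - (p.1.2 - p.1.1)|) ⟨2 * M / t n, by rintro _ ⟨p, rfl⟩; exact hbound p⟩
        ⟨(0, 1 / (2 * (t n : ℝ))), le_rfl, by positivity, hε⟩)
      have hfirst : lsSeq L S γ 1 = 0 := by
        rw [lsSeq, Nat.sub_self, Nat.nth_zero_of_zero memNLS_zero, lsPhi_zero hL hS]
      have hone : (1 : ℝ) ≤ ∑ j ∈ Finset.Icc 1 (t n),
          Set.indicator (Set.Ico 0 (1 / (2 * (t n : ℝ)))) (fun _ => (1 : ℝ)) (lsSeq L S γ j) := by
        refine le_trans ?_ (Finset.single_le_sum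
          (fun j _ => Set.indicator_nonneg (fun _ _ => zero_le_one) _)
          (Finset.mem_Icc.2 ⟨le_rfl, htpos n⟩))
        rw [hfirst, Set.indicator_of_mem (Set.mem_Ico.2 ⟨le_rfl, by positivity⟩)]
      refine le_trans ?_ (le_abs_self _)
      dsimp only
      have h1 := div_le_div_of_nonneg_right hone hN.le
      have h2 : 1 / (t n : ℝ) = 1 / (2 * t n) + 1 / (2 * t n) := by
        field_simp
        norm_num
      linarith
    calc (1 / 2 : ℝ) = t n * (1 / (2 * t n)) := by field_simp
      _ ≤ _ := by gcongr
  · have : Nonempty {p : ℝ × ℝ // 0 ≤ p.1 ∧ p.1 < p.2 ∧ p.2 ≤ 1} :=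
      ⟨⟨(0, 1), le_rfl, one_pos, le_rfl⟩⟩
    calc (t n : ℝ) * discrep (lsSeq L S γ) (t n) ≤ t n * (2 * M / t n) := by
          gcongr
          exact ciSup_le hbound
      _ = 2 * M := by field_simp
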